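/- Let $D = \operatorname{diag}(d_1, \dots, d_m) \in \mathbb{C}^{m\times m}$ with $d_1, \dots, d_m$ pairwise distinct, $z \in \mathbb{C}^m$, $\rho \in \mathbb{C}$, and let $\lambda \in \mathbb{C}$ satisfy $\lambda \neq d_i$ for all $i$ and $1 + \rho \sum_{i=1}^{m} \frac{z_i^2}{d_i - \lambda} = 0$. Fix an index $s$, let $D_\mathrm{d} = \operatorname{diag}\big((d_i)_{i \neq s}\big) \in \mathbb{C}^{(m-1)\times(m-1)}$, and let $z_\mathrm{d} \in \mathbb{C}^{m-1}$ be any vector whose entries satisfy $(z_\mathrm{d})_i^2 = z_i^2\,\frac{d_i - d_s}{d_i - \lambda}$ for each $i \neq s$. Then for all $\mu \in \mathbb{C}$, $\det\big(D + \rho\, z z^\top - \mu I\big) = (\lambda - \mu)\,\det\big(D_\mathrm{d} + \rho\, z_\mathrm{d} z_\mathrm{d}^\top - \mu I\big)$; in particular, the spectrum of the deflated matrix $A_\mathrm{d} = D_\mathrm{d} + \rho\, z_\mathrm{d} z_\mathrm{d}^\top$ is the spectrum of $A = D + \rho\, z z^\top$ with one copy of $\lambda$ removed. -/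

import Mathlib

open Matrix

/-!
Row-multilinearity gives a division-free matrix determinant lemma, so for a diagonal matrix
`det (diagonal a + u vᵀ) = ∏ i, a i + ∑ i, u i * v i * ∏ j ≠ i, a j` over any commutative ring.
Hence both sides of the deflation identity are explicit for every `μ`, also when `μ` is one of the
`d i`. They are compared term by term through
`(lam - μ) * (d i - d s) = (d s - μ) * (d i - lam) + (lam - d s) * (d i - μ)`: the first summand
gives the rank-one terms of the original matrix, and the second collects into the secular sum at
`lam`, whose value is known.
-/

section MatrixDeterminantLemma

variable {n R : Type*} [Fintype n] [DecidableEq n] [CommRing R]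

theorem det_add_vecMulVec_update (A : Matrix n n R) (u v : n → R) (k : n) (c : R)
    (hk : u k = 0) :
    (A + vecMulVec (Function.update u k c) v).det =
      (A + vecMulVec u v).det + c * (A.updateRow k v).det := by
  have perturb_row : A + vecMulVec (Function.update u k c) v =
      (A + vecMulVec u v).updateRow k ((A + vecMulVec u v) k + c • v) := by
    ext i j
    obtain rfl | hik := eq_or_ne i k
    · simp [vecMulVec_apply, hk]
    · simp [vecMulVec_apply, hik]
  have clear_rows : ((A + vecMulVec u v).updateRow k v).det = (A.updateRow k v).det := by
    refine det_eq_of_forall_row_eq_smul_add_const u k hk fun i j => ?_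
    obtain rfl | hik := eq_or_ne i k
    · simp [hk]
    · simp [vecMulVec_apply, hik]
  rw [perturb_row, det_updateRow_add, updateRow_eq_self, det_updateRow_smul, clear_rows]

theorem det_add_vecMulVec (A : Matrix n n R) (u v : n → R) :
    (A + vecMulVec u v).det = A.det + u ⬝ᵥ v ᵥ* A.adjugate := by
  have perturb_rows (S : Finset n) : (A + vecMulVec (S.piecewise u 0) v).det =
      A.det + ∑ i ∈ S, u i * (A.updateRow i v).det := by
    induction S using Finset.induction_on with
    | empty => simp
    | insert k S hk ih =>
      rw [Finset.piecewise_insert, det_add_vecMulVec_update _ _ _ _ _ (by simp [hk]), ih,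
        Finset.sum_insert hk]
      ring
  have cramer_eq : v ᵥ* A.adjugate = fun i => (A.updateRow i v).det := by
    ext i
    rw [← cramer_transpose_apply, cramer_eq_adjugate_mulVec, ← adjugate_transpose,
      mulVec_transpose]
  simpa [cramer_eq, dotProduct] using perturb_rows Finset.univ

theorem det_diagonal_add_vecMulVec (a u v : n → R) :
    (diagonal a + vecMulVec u v).det =
      ∏ i, a i + ∑ i, u i * v i * ∏ j ∈ Finset.univ.erase i, a j := by
  simp only [det_add_vecMulVec, det_diagonal, adjugate_diagonal, dotProduct, vecMul_diagonal,
    mul_assoc]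

theorem det_diagonal_add_smul_vecMulVec_sub_smul_one (d u v : n → R) (ρ μ : R) :
    (diagonal d + ρ • vecMulVec u v - μ • (1 : Matrix n n R)).det =
      ∏ i, (d i - μ) + ρ * ∑ i, u i * v i * ∏ j ∈ Finset.univ.erase i, (d j - μ) := by
  have shift : diagonal d + ρ • vecMulVec u v - μ • (1 : Matrix n n R) =
      diagonal (fun i => d i - μ) + vecMulVec (ρ • u) v := by
    rw [smul_one_eq_diagonal, ← diagonal_sub, smul_vecMulVec]
    abel
  simp only [shift, det_diagonal_add_vecMulVec, Finset.mul_sum, Pi.smul_apply, smul_eq_mul,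
    mul_assoc]

end MatrixDeterminantLemma

theorem prod_erase_eq_mul_prod_subtype_ne_erase {n M : Type*} [Fintype n] [DecidableEq n]
    [CommMonoid M] (a : n → M) {s : n} (i : {i // i ≠ s}) :
    ∏ j ∈ Finset.univ.erase (i : n), a j = a s * ∏ j ∈ Finset.univ.erase i, a j := by
  have split_update := Fintype.prod_eq_mul_prod_subtype_ne (Function.update a i 1) s
  have update_restrict (j : {i // i ≠ s}) :
      Function.update a i 1 j = Function.update (fun j : {i // i ≠ s} => a j) i 1 j :=
    congrFun (Function.update_comp_eq_of_injective a Subtype.val_injective i 1) j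
  simpa only [update_restrict, Finset.prod_update_of_mem (Finset.mem_univ _), one_mul,
    Function.update_of_ne i.2.symm, ← Finset.erase_eq] using split_update

section Deflation

variable {n K : Type*} [Fintype n] [DecidableEq n] [Field K]

theorem sub_mul_sum_deflated_weights (d w : n → K) (lam μ : K) (s : n)
    (hlam : ∀ i : {i // i ≠ s}, lam ≠ d i) :
    (lam - μ) * ∑ i : {i // i ≠ s},
        w i * ((d i - d s) / (d i - lam)) * ∏ j ∈ Finset.univ.erase i, (d j - μ) =
      ∑ i : {i // i ≠ s}, w i * ∏ j ∈ Finset.univ.erase (i : n), (d j - μ) +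
        (lam - d s) * (∏ i : {i // i ≠ s}, (d i - μ)) *
          ∑ i : {i // i ≠ s}, w i / (d i - lam) := by
  rw [Finset.mul_sum, Finset.mul_sum, ← Finset.sum_add_distrib]
  refine Finset.sum_congr rfl fun i _ => ?_
  have hne : d i - lam ≠ 0 := sub_ne_zero.mpr (hlam i).symm
  rw [prod_erase_eq_mul_prod_subtype_ne_erase (fun j => d j - μ),
    ← Finset.mul_prod_erase _ (fun j : {i // i ≠ s} => d j - μ) (Finset.mem_univ i)]
  field_simp
  ring

theorem dpr1csym_deflation_general (d u v : n → K) (ρ lam : K) (hlam : ∀ i, lam ≠ d i)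
    (hsec : 1 + ρ * ∑ i, u i * v i / (d i - lam) = 0)
    (s : n) (ud vd : {i // i ≠ s} → K)
    (hdefl : ∀ i : {i // i ≠ s}, ud i * vd i = u i * v i * ((d i - d s) / (d i - lam)))
    (μ : K) :
    (diagonal d + ρ • vecMulVec u v - μ • (1 : Matrix n n K)).det =
      (lam - μ) * (diagonal (fun i : {i // i ≠ s} => d i) + ρ • vecMulVec ud vd
        - μ • (1 : Matrix {i // i ≠ s} {i // i ≠ s} K)).det := by
  have deflated_sum :=
    sub_mul_sum_deflated_weights d (fun i => u i * v i) lam μ s fun i => hlam i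
  have pole_at_s : (lam - d s) * (u s * v s / (d s - lam)) = -(u s * v s) := by
    have hne : d s - lam ≠ 0 := sub_ne_zero.mpr (hlam s).symm
    field_simp
    ring
  have prod_erase_s : ∏ j ∈ Finset.univ.erase s, (d j - μ) = ∏ i : {i // i ≠ s}, (d i - μ) :=
    Finset.prod_subtype _ (by simp) _
  rw [Fintype.sum_eq_add_sum_subtype_ne _ s] at hsec
  simp only [det_diagonal_add_smul_vecMulVec_sub_smul_one, hdefl]
  rw [Fintype.prod_eq_mul_prod_subtype_ne _ s, Fintype.sum_eq_add_sum_subtype_ne _ s, prod_erase_s]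
  linear_combination (∏ i : {i // i ≠ s}, (d i - μ)) * (ρ * pole_at_s - (lam - d s) * hsec)
    - ρ * deflated_sum

end Deflation

/-- Deflation of an eigenvalue `λ` (a zero of the secular function) from a
diagonal-plus-rank-one complex symmetric matrix: the characteristic determinant
factors as `(λ - μ)` times that of the deflated matrix. -/
theorem dpr1csym_deflation (m : ℕ) (d z : Fin m → ℂ) (hd : Function.Injective d)
    (ρ : ℂ) (lam : ℂ) (hlam : ∀ i, lam ≠ d i)
    (hsec : 1 + ρ * ∑ i, z i ^ 2 / (d i - lam) = 0)
    (s : Fin m) (zd : {i : Fin m // i ≠ s} → ℂ)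
    (hzd : ∀ i : {i : Fin m // i ≠ s},
      zd i ^ 2 = z i ^ 2 * ((d i - d s) / (d i - lam))) :
    ∀ μ : ℂ,
      (Matrix.diagonal d + ρ • vecMulVec z z
          - μ • (1 : Matrix (Fin m) (Fin m) ℂ)).det =
        (lam - μ) *
          (Matrix.diagonal (fun i : {i : Fin m // i ≠ s} => d i) + ρ • vecMulVec zd zd
              - μ • (1 : Matrix {i : Fin m // i ≠ s} {i : Fin m // i ≠ s} ℂ)).det := by
  exact dpr1csym_deflation_general d z z ρ lam hlam (by simpa only [sq] using hsec) s zd zd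
    (by simpa only [sq] using hzd)
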